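/- Let T > 0, ω = 2π/T, N ∈ ℕ, and let a₀,…,a_N be complex numbers with a₀ = 0. Define p(t) = Re(∑_{k=0}^{N} a_k e^{ι k ω t}). Then for every integer m with 1 ≤ m ≤ N, (1/T) ∫₀^T (d²/dt²)(p(t)²) e^{−ι m ω t} dt = −(m² ω²/4) ( ∑_{k=1}^{m} a_k a_{m−k} + 2 ∑_{l=0}^{N−m} conj(a_l) a_{l+m} ). -/

import Mathlib

open Finset Complex

/-!
Write `p = Re P` with `P = ∑ a_k e_k` and `e_k(t) = e^{ι k ω t}`. Integrating by parts twice over a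
period multiplies the `m`-th Fourier coefficient of `p²` by `(ι m ω)² = -m² ω²`, and
`p² = (P² + 2 conj(P) P + conj(P)²) / 4`. Since `e_j e_k = e_{j+k}` and `conj(e_k) = e_{-k}`, the
`m`-th coefficient of `P²` is a convolution and that of `conj(P) P` a correlation of the sequence
`a`, while `conj(P)²` carries no positive frequency.
-/

open scoped ComplexConjugate

section Derivatives

variable {a b : ℝ}

theorem fourierCoeffOn_of_hasDerivAt_of_eq (hab : a < b) {f f' : ℝ → ℂ} (n : ℤ)
    (hf : ∀ x ∈ Set.uIcc a b, HasDerivAt f (f' x) x)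
    (hf' : IntervalIntegrable f' MeasureTheory.volume a b) (hfab : f a = f b) :
    fourierCoeffOn hab f' n = 2 * Real.pi * I * n / (b - a) * fourierCoeffOn hab f n := by
  have hba : (b : ℂ) - a ≠ 0 := by exact_mod_cast (sub_pos.mpr hab).ne'
  rcases eq_or_ne n 0 with rfl | hn
  · have hint : ∫ x in a..b, f' x = 0 := by
      rw [intervalIntegral.integral_eq_sub_of_hasDerivAt hf hf', hfab, sub_self]
    simp [fourierCoeffOn_eq_integral, hint]
  · rw [fourierCoeffOn_of_hasDerivAt hab hn hf hf', hfab, sub_self, mul_zero, zero_sub]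
    have hn' : (n : ℂ) ≠ 0 := Int.cast_ne_zero.mpr hn
    field_simp [Real.pi_ne_zero]

theorem fourierCoeffOn_iteratedDeriv (hab : a < b) (n : ℤ) (k : ℕ) {f : ℝ → ℂ}
    (hf : ContDiff ℝ k f) (hper : Function.Periodic f (b - a)) :
    fourierCoeffOn hab (iteratedDeriv k f) n =
      (2 * Real.pi * I * n / (b - a)) ^ k * fourierCoeffOn hab f n := by
  induction k generalizing f with
  | zero => simp
  | succ k ih =>
    obtain ⟨hdiff, -, hderiv⟩ := (contDiff_succ_iff_deriv (n := k)).mp (by exact_mod_cast hf)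
    have hper' : Function.Periodic (deriv f) (b - a) := fun x ↦ by
      rw [← deriv_comp_add_const, funext hper]
    have hends : f a = f b := by simpa using (hper a).symm
    rw [iteratedDeriv_succ', ih hderiv hper',
      fourierCoeffOn_of_hasDerivAt_of_eq hab n (fun x _ ↦ (hdiff x).hasDerivAt)
        (hderiv.continuous.intervalIntegrable a b) hends]
    ring

theorem iteratedDeriv_ofReal_comp (k : ℕ) {q : ℝ → ℝ} (hq : ContDiff ℝ k q) :
    iteratedDeriv k (fun t ↦ (q t : ℂ)) = fun t ↦ ((iteratedDeriv k q t : ℝ) : ℂ) := by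
  induction k generalizing q with
  | zero => simp
  | succ k ih =>
    obtain ⟨hdiff, -, hderiv⟩ := (contDiff_succ_iff_deriv (n := k)).mp (by exact_mod_cast hq)
    have hcast : deriv (fun t ↦ (q t : ℂ)) = fun t ↦ ((deriv q t : ℝ) : ℂ) :=
      funext fun t ↦ (hdiff t).hasDerivAt.ofReal_comp.deriv
    simp only [iteratedDeriv_succ', hcast, ih hderiv]

end Derivatives

theorem fourierCoeffOn_zero_left_eq_integral {T : ℝ} (hT : 0 < T) (f : ℝ → ℂ) (n : ℤ) :
    fourierCoeffOn hT f n =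
      1 / (T : ℂ) * ∫ t in (0 : ℝ)..T, f t * exp (-I * n * ((2 * Real.pi / T : ℝ) : ℂ) * t) := by
  have hexp (t : ℝ) : fourier (-n) (t : AddCircle (T - 0)) =
      exp (-I * n * ((2 * Real.pi / T : ℝ) : ℂ) * t) := by
    rw [fourier_coe_apply]
    congr 1
    push_cast
    ring
  rw [fourierCoeffOn_eq_integral]
  simp only [hexp, sub_zero, real_smul, smul_eq_mul, mul_comm (exp _), ofReal_div, ofReal_one]

section Circle

variable {T : ℝ}

/-- The complex truncated harmonic expansion `∑_{k ≤ N} a_k e^{ι k ω t}` with `ω = 2π/T`, as a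
continuous function on the circle `ℝ / Tℤ`, so that products and conjugates of expansions are again
such functions. Its real part is the expansion `p`. -/
noncomputable def harmonicSum (T : ℝ) (N : ℕ) (a : ℕ → ℂ) : C(AddCircle T, ℂ) :=
  ∑ k ∈ range (N + 1), a k • fourier (k : ℤ)

theorem star_harmonicSum (N : ℕ) (a : ℕ → ℂ) :
    star (harmonicSum T N a) = ∑ k ∈ range (N + 1), conj (a k) • fourier (-(k : ℤ)) := by
  ext x
  simp [harmonicSum, -fourier_apply, fourier_neg]

theorem harmonicSum_apply_coe (N : ℕ) (a : ℕ → ℂ) (t : ℝ) :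
    harmonicSum T N a t =
      ∑ k ∈ range (N + 1), a k * exp (I * k * ((2 * Real.pi / T : ℝ) : ℂ) * t) := by
  simp only [harmonicSum, ContinuousMap.coe_sum, ContinuousMap.coe_smul, Finset.sum_apply,
    Pi.smul_apply, smul_eq_mul, fourier_coe_apply]
  refine sum_congr rfl fun k _ ↦ ?_
  congr 2
  push_cast
  ring

theorem contDiff_harmonicSum (n : WithTop ℕ∞) (N : ℕ) (a : ℕ → ℂ) :
    ContDiff ℝ n fun t : ℝ ↦ harmonicSum T N a t := by
  have hcast : ContDiff ℝ n ((↑) : ℝ → ℂ) := ofRealCLM.contDiff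
  simp only [harmonicSum_apply_coe]
  fun_prop

variable [hT : Fact (0 < T)]

theorem fourierCoeffOn_coe (f : AddCircle T → ℂ) (n : ℤ) :
    fourierCoeffOn hT.out (fun t : ℝ ↦ f t) n = fourierCoeff f n := by
  rw [fourierCoeffOn_eq_integral, fourierCoeff_eq_intervalIntegral f n 0]
  simp only [fourier_coe_apply, sub_zero, zero_add]

theorem fourierCoeffOn_deriv_deriv {g : AddCircle T → ℝ} (hg : ContDiff ℝ 2 fun t : ℝ ↦ g t)
    (n : ℤ) :
    fourierCoeffOn hT.out (fun t ↦ ((deriv (deriv fun s : ℝ ↦ g s) t : ℝ) : ℂ)) n =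
      -((n : ℂ) ^ 2 * ((2 * Real.pi / T : ℝ) : ℂ) ^ 2) * fourierCoeff (fun x ↦ (g x : ℂ)) n := by
  have hper : Function.Periodic (fun t : ℝ ↦ (g t : ℂ)) (T - 0) := fun t ↦ by
    simp only [sub_zero, AddCircle.coe_add_period]
  have hiter : iteratedDeriv 2 (fun t : ℝ ↦ (g t : ℂ)) =
      fun t ↦ ((deriv (deriv fun s : ℝ ↦ g s) t : ℝ) : ℂ) := by
    rw [iteratedDeriv_ofReal_comp 2 hg]
    simp only [iteratedDeriv_succ, iteratedDeriv_zero]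
  have hsmooth : ContDiff ℝ 2 fun t : ℝ ↦ (g t : ℂ) := ofRealCLM.contDiff.comp hg
  rw [← hiter, fourierCoeffOn_iteratedDeriv hT.out n 2 hsmooth hper,
    fourierCoeffOn_coe fun x ↦ (g x : ℂ)]
  congr 1
  push_cast
  linear_combination (2 * Real.pi * n / T : ℂ) ^ 2 * I_sq

theorem integrable_haarAddCircle (f : C(AddCircle T, ℂ)) :
    MeasureTheory.Integrable f AddCircle.haarAddCircle := by
  simpa using f.continuous.continuousOn.integrableOn_compact isCompact_univ

theorem fourierCoeff_sum_smul_fourier {ι : Type*} (s : Finset ι) (c : ι → ℂ) (ν : ι → ℤ) (n : ℤ) :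
    fourierCoeff (∑ i ∈ s, c i • fourier (ν i) : C(AddCircle T, ℂ)) n =
      ∑ i ∈ s with ν i = n, c i := by
  rw [ContinuousMap.coe_sum, fourierCoeff.sum _ _ fun i _ ↦ integrable_haarAddCircle _,
    Finset.sum_apply, sum_filter]
  refine sum_congr rfl fun i _ ↦ ?_
  rw [ContinuousMap.coe_smul, fourierCoeff.const_smul, fourierCoeff_fourier, Pi.single_apply]
  simp [eq_comm]

theorem fourierCoeff_sum_mul_sum {ι κ : Type*} (s : Finset ι) (t : Finset κ) (c : ι → ℂ)
    (d : κ → ℂ) (μ : ι → ℤ) (ν : κ → ℤ) (n : ℤ) :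
    fourierCoeff ((∑ i ∈ s, c i • fourier (μ i)) * ∑ j ∈ t, d j • fourier (ν j) :
        C(AddCircle T, ℂ)) n =
      ∑ x ∈ s ×ˢ t with μ x.1 + ν x.2 = n, c x.1 * d x.2 := by
  rw [← fourierCoeff_sum_smul_fourier (T := T), sum_mul_sum, ← sum_product']
  congr 2 with x
  simp only [smul_mul_smul_comm, ContinuousMap.coe_sum, ContinuousMap.coe_smul, Finset.sum_apply,
    Pi.smul_apply, ContinuousMap.mul_apply, fourier_add]

theorem fourierCoeff_re_sq (f : C(AddCircle T, ℂ)) (n : ℤ) :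
    fourierCoeff (fun x ↦ (((f x).re ^ 2 : ℝ) : ℂ)) n =
      (fourierCoeff (f * f) n + 2 * fourierCoeff (star f * f) n +
        fourierCoeff (star f * star f) n) / 4 := by
  have hexpand : (fun x ↦ (((f x).re ^ 2 : ℝ) : ℂ)) =
      (1 / 4 : ℂ) • (⇑(f * f) + (2 : ℂ) • ⇑(star f * f) + ⇑(star f * star f)) := by
    ext x
    simp only [ofReal_pow, re_eq_add_conj, Pi.smul_apply, Pi.add_apply, ContinuousMap.mul_apply,
      ContinuousMap.star_apply, smul_eq_mul, RCLike.star_def]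
    ring
  have hint := integrable_haarAddCircle (T := T)
  rw [hexpand, fourierCoeff.const_smul,
    fourierCoeff.add ((hint _).add ((hint _).smul _)) (hint _),
    fourierCoeff.add (hint _) ((hint _).smul _), Pi.add_apply, Pi.add_apply,
    fourierCoeff.const_smul, smul_eq_mul, smul_eq_mul]
  simp only [ContinuousMap.coe_mul]
  ring

theorem fourierCoeff_harmonicSum_mul {N m : ℕ} (hm : m ≤ N) (a b : ℕ → ℂ) :
    fourierCoeff (harmonicSum T N a * harmonicSum T N b) m =
      ∑ x ∈ antidiagonal m, a x.1 * b x.2 := by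
  rw [harmonicSum, harmonicSum, fourierCoeff_sum_mul_sum]
  refine sum_congr ?_ fun _ _ ↦ rfl
  ext x
  simp only [mem_filter, mem_product, mem_range, HasAntidiagonal.mem_antidiagonal]
  omega

theorem fourierCoeff_star_harmonicSum_mul {N m : ℕ} (hm : m ≤ N) (a b : ℕ → ℂ) :
    fourierCoeff (star (harmonicSum T N a) * harmonicSum T N b) m =
      ∑ l ∈ range (N - m + 1), conj (a l) * b (l + m) := by
  rw [star_harmonicSum, harmonicSum, fourierCoeff_sum_mul_sum]
  symm
  refine sum_nbij' (fun l ↦ (l, l + m)) Prod.fst ?_ ?_ ?_ ?_ fun _ _ ↦ rfl <;> grind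

theorem fourierCoeff_star_harmonicSum_mul_star {n : ℤ} (hn : 0 < n) (N : ℕ) (a b : ℕ → ℂ) :
    fourierCoeff (star (harmonicSum T N a) * star (harmonicSum T N b)) n = 0 := by
  rw [star_harmonicSum, star_harmonicSum, fourierCoeff_sum_mul_sum]
  exact sum_eq_zero fun x hx ↦ absurd (mem_filter.mp hx).2 (by omega)

theorem fourierCoeff_re_harmonicSum_sq {N m : ℕ} (hm : 1 ≤ m) (hmN : m ≤ N) (a : ℕ → ℂ) :
    fourierCoeff (fun x ↦ (((harmonicSum T N a x).re ^ 2 : ℝ) : ℂ)) m =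
      ((∑ x ∈ antidiagonal m, a x.1 * a x.2) +
        2 * ∑ l ∈ range (N - m + 1), conj (a l) * a (l + m)) / 4 := by
  rw [fourierCoeff_re_sq, fourierCoeff_harmonicSum_mul hmN, fourierCoeff_star_harmonicSum_mul hmN,
    fourierCoeff_star_harmonicSum_mul_star (by omega), add_zero]

end Circle

theorem sum_antidiagonal_eq_sum_Icc {R : Type*} [NonUnitalNonAssocSemiring R] {a : ℕ → R}
    (ha : a 0 = 0) (b : ℕ → R) (m : ℕ) :
    ∑ x ∈ antidiagonal m, a x.1 * b x.2 = ∑ k ∈ Icc 1 m, a k * b (m - k) := by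
  rw [Nat.sum_antidiagonal_eq_sum_range_succ fun i j ↦ a i * b j, Nat.range_succ_eq_Icc_zero,
    ← add_sum_Ioc_eq_sum_Icc m.zero_le, ha, zero_mul, zero_add]
  rfl

theorem stmt_12_general
    (T : ℝ) (hT : 0 < T) (ω : ℝ) (hω : ω = 2 * Real.pi / T)
    (N : ℕ) (a : ℕ → ℂ)
    (p : ℝ → ℝ)
    (hp : ∀ t : ℝ, p t =
      (∑ k ∈ range (N + 1), a k * Complex.exp (Complex.I * k * ω * t)).re) :
    ∀ m : ℕ, 1 ≤ m → m ≤ N →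
      (1 / (T : ℂ)) * ∫ t in (0 : ℝ)..T,
          ((deriv (deriv (fun s : ℝ => p s ^ 2)) t : ℝ) : ℂ) *
            Complex.exp (-Complex.I * m * ω * t) =
        -(((m : ℂ) ^ 2 * (ω : ℂ) ^ 2) / 4) *
          ((∑ x ∈ antidiagonal m, a x.1 * a x.2) +
            2 * ∑ l ∈ range (N - m + 1), conj (a l) * a (l + m)) := by
  intro m hm hmN
  subst hω
  have := Fact.mk hT
  have hp' : p = fun t : ℝ ↦ (harmonicSum T N a t).re := by
    ext t
    rw [hp, harmonicSum_apply_coe]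
  have hsmooth : ContDiff ℝ 2 fun t : ℝ ↦ (harmonicSum T N a t).re ^ 2 :=
    (reCLM.contDiff.comp (contDiff_harmonicSum 2 N a)).pow 2
  have hcoeff := fourierCoeffOn_deriv_deriv (g := fun x ↦ (harmonicSum T N a x).re ^ 2) hsmooth m
  rw [fourierCoeff_re_harmonicSum_sq hm hmN, fourierCoeffOn_zero_left_eq_integral] at hcoeff
  simp only [Int.cast_natCast] at hcoeff
  rw [hp', hcoeff]
  ring

/-- Fourier coefficients of the projected second time derivative of the
square of a truncated harmonic expansion `p` (with vanishing mean, `a₀ = 0`):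
for `1 ≤ m ≤ N`,
`(1/T) ∫₀^T (p²)'' e^{−ι m ω t} dt
  = −(m² ω²/4)(∑_{k=1}^m a_k a_{m−k} + 2 ∑_{l=0}^{N−m} conj(a_l) a_{l+m})`. -/
theorem stmt_12
    (T : ℝ) (hT : 0 < T) (ω : ℝ) (hω : ω = 2 * Real.pi / T)
    (N : ℕ) (a : ℕ → ℂ) (ha0 : a 0 = 0)
    (p : ℝ → ℝ)
    (hp : ∀ t : ℝ, p t =
      (∑ k ∈ range (N + 1), a k * Complex.exp (Complex.I * k * ω * t)).re) :
    ∀ m : ℕ, 1 ≤ m → m ≤ N →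
      (1 / (T : ℂ)) * ∫ t in (0 : ℝ)..T,
          ((deriv (deriv (fun s : ℝ => p s ^ 2)) t : ℝ) : ℂ) *
            Complex.exp (-Complex.I * m * ω * t) =
        -(((m : ℂ) ^ 2 * (ω : ℂ) ^ 2) / 4) *
          ((∑ k ∈ Finset.Icc 1 m, a k * a (m - k)) +
            2 * ∑ l ∈ range (N - m + 1), (starRingEnd ℂ) (a l) * a (l + m)) := by
  simpa only [sum_antidiagonal_eq_sum_Icc ha0] using stmt_12_general T hT ω hω N a p hp
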